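/- Let I ⊂ R and J ⊂ T be nonzero proper graded ideals, identified with their extensions to S = R ⊗_K T. Then there exists k_0 ≥ 1 such that for all k ≥ k_0, v((IJ)^k) = min{ v(I^k) + α(J)·k , v(J^k) + α(I)·k }. -/

import Mathlib

open MvPolynomial

noncomputable section

/-- The set of associated primes `Ass(L)` of the quotient by an ideal `L`. -/
def assOf {A : Type} [CommRing A] (L : Ideal A) : Set (Ideal A) :=
  associatedPrimes A (A ⧸ L)

/-- `𝔄` is the stable value `Ass^∞(L)` of `Ass(L^k)` for all large `k`. -/
def IsStableAssValue {A : Type} [CommRing A] (L : Ideal A) (𝔄 : Set (Ideal A)) : Prop :=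
  ∃ N : ℕ, ∀ k : ℕ, N ≤ k → assOf (L ^ k) = 𝔄

/-- `Ass^*(L) = ⋃_{k ≥ 1} Ass(L^k)`. -/
def assStar {A : Type} [CommRing A] (L : Ideal A) : Set (Ideal A) :=
  {p | ∃ k : ℕ, 1 ≤ k ∧ p ∈ assOf (L ^ k)}

/-- The local v-number `v_p(L)`: the least degree of a homogeneous `f` with `(L : f) = p`. -/
def vnum {σ K : Type} [Field K] (L p : Ideal (MvPolynomial σ K)) : ℕ :=
  sInf {d : ℕ | ∃ f : MvPolynomial σ K, f.IsHomogeneous d ∧ L.colon (Ideal.span {f}) = p}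

/-- The v-number `v(L) = min_{p ∈ Ass(L)} v_p(L)`. -/
def vnumber {σ K : Type} [Field K] (L : Ideal (MvPolynomial σ K)) : ℕ :=
  sInf {d : ℕ | ∃ p ∈ assOf L, ∃ f : MvPolynomial σ K,
    f.IsHomogeneous d ∧ L.colon (Ideal.span {f}) = p}

/-- The initial degree `α(L)`: the least `d` such that `L` contains a nonzero
homogeneous element of degree `d`. -/
def alphaDeg {σ K : Type} [Field K] (L : Ideal (MvPolynomial σ K)) : ℕ :=
  sInf {d : ℕ | ∃ f ∈ L, f ≠ 0 ∧ MvPolynomial.IsHomogeneous f d}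

/-- A graded (homogeneous) ideal: one containing all homogeneous components
of each of its elements. -/
def IsGradedIdeal {σ K : Type} [Field K] (I : Ideal (MvPolynomial σ K)) : Prop :=
  ∀ f ∈ I, ∀ d : ℕ, homogeneousComponent d f ∈ I

/-- A monomial ideal: an ideal generated by monomials. -/
def IsMonomialIdeal {σ K : Type} [Field K] (I : Ideal (MvPolynomial σ K)) : Prop :=
  ∃ G : Set (σ →₀ ℕ), I = Ideal.span ((fun a => (monomial a (1 : K))) '' G)

section Iterated

variable {K R τ : Type} [Field K] [CommRing R] [Algebra K R]

/-- The polynomial obtained by applying a linear functional to all coefficients. -/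
def mapFunctional (φ : R →ₗ[K] K) (F : MvPolynomial τ R) : MvPolynomial τ K :=
  ∑ u ∈ F.support, monomial u (φ (coeff u F))

lemma coeff_mapFunctional (φ : R →ₗ[K] K) (F : MvPolynomial τ R) (u : τ →₀ ℕ) :
    coeff u (mapFunctional φ F) = φ (coeff u F) := by
  classical
  simp only [mapFunctional, coeff_sum, coeff_monomial, Finset.sum_ite_eq', mem_support_iff]
  split_ifs with h
  · rfl
  · rw [not_not.mp h, map_zero]

lemma mapFunctional_map_mul (φ : R →ₗ[K] K) (g : MvPolynomial τ K) (F : MvPolynomial τ R) :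
    mapFunctional φ (map (algebraMap K R) g * F) = g * mapFunctional φ F := by
  classical
  ext u
  simp only [coeff_mapFunctional, coeff_mul, map_sum, coeff_map, ← Algebra.smul_def, map_smul,
    smul_eq_mul]

/-- A nonzero polynomial over a field is a nonzerodivisor modulo an ideal of coefficients. -/
lemma mem_map_C_of_map_mul_mem (A : Ideal R) {g : MvPolynomial τ K} (hg : g ≠ 0)
    {F : MvPolynomial τ R} (h : map (algebraMap K R) g * F ∈ A.map (C : R →+* MvPolynomial τ R)) :
    F ∈ A.map (C : R →+* MvPolynomial τ R) := by
  rw [mem_map_C_iff] at h ⊢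
  by_contra! hF
  obtain ⟨u, hu⟩ := hF
  obtain ⟨φ, hφu, hφA⟩ := Submodule.exists_le_ker_of_notMem
    (p := A.restrictScalars K) hu
  have hz : g * mapFunctional φ F = 0 := by
    rw [← mapFunctional_map_mul]
    ext v
    rw [coeff_mapFunctional, coeff_zero]
    exact hφA (h v)
  rcases mul_eq_zero.mp hz with h0 | h0
  · exact hg h0
  · apply hφu
    rw [← coeff_mapFunctional, h0, coeff_zero]

lemma mapFunctional_mem (φ : R →ₗ[K] K) (B : Ideal (MvPolynomial τ K)) {F : MvPolynomial τ R}
    (hF : F ∈ B.map (map (algebraMap K R))) : mapFunctional φ F ∈ B := by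
  suffices h : ∀ s, mapFunctional φ (s * F) ∈ B by simpa using h 1
  induction hF using Submodule.span_induction with
  | mem x hx =>
    obtain ⟨b, hb, rfl⟩ := hx
    intro s
    rw [mul_comm s, mapFunctional_map_mul]
    exact B.mul_mem_right _ hb
  | zero => simp [mapFunctional]
  | add x y _ _ hx hy =>
    intro s
    have hadd : mapFunctional φ (s * (x + y)) =
        mapFunctional φ (s * x) + mapFunctional φ (s * y) := by
      ext u
      simp [coeff_mapFunctional, mul_add]
    rw [hadd]
    exact B.add_mem (hx s) (hy s)
  | smul a x _ hx =>
    intro s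
    rw [smul_eq_mul, ← mul_assoc]
    exact hx _

/-- The `R`-linear extension of a `K`-linear endomorphism of `K[τ]` to `R[τ]`. -/
def extendEnd (R : Type) [CommRing R] [Algebra K R]
    (π : MvPolynomial τ K →ₗ[K] MvPolynomial τ K) : MvPolynomial τ R →ₗ[R] MvPolynomial τ R :=
  (basisMonomials τ R).constr R fun u => map (algebraMap K R) (π (monomial u 1))

lemma extendEnd_monomial (π : MvPolynomial τ K →ₗ[K] MvPolynomial τ K) (u : τ →₀ ℕ) (r : R) :
    extendEnd R π (monomial u r) = C r * map (algebraMap K R) (π (monomial u 1)) := by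
  have h : extendEnd R π (monomial u 1) = map (algebraMap K R) (π (monomial u 1)) := by
    simpa [extendEnd] using (basisMonomials τ R).constr_basis R
      (fun u => map (algebraMap K R) (π (monomial u 1))) u
  rw [← mul_one r, ← smul_eq_mul, ← smul_monomial, map_smul, h, smul_eq_C_mul]
  simp

lemma extendEnd_C_mul_map (π : MvPolynomial τ K →ₗ[K] MvPolynomial τ K) (r : R)
    (t : MvPolynomial τ K) :
    extendEnd R π (C r * map (algebraMap K R) t) = C r * map (algebraMap K R) (π t) := by
  induction t using MvPolynomial.induction_on' with
  | monomial u a =>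
    have ha : (monomial u a : MvPolynomial τ K) = a • monomial u 1 := by
      rw [smul_monomial, smul_eq_mul, mul_one]
    rw [map_monomial, C_mul_monomial, extendEnd_monomial, ha, map_smul, smul_eq_C_mul]
    simp only [map_mul, map_C, mul_assoc]
  | add p q hp hq => simp only [map_add, mul_add, hp, hq]

lemma extendEnd_eq_self (π : MvPolynomial τ K →ₗ[K] MvPolynomial τ K)
    (B : Ideal (MvPolynomial τ K)) (hπ : ∀ b ∈ B, π b = b) {F : MvPolynomial τ R}
    (hF : F ∈ B.map (map (algebraMap K R))) : extendEnd R π F = F := by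
  suffices h : ∀ s, extendEnd R π (s * F) = s * F by simpa using h 1
  induction hF using Submodule.span_induction with
  | mem x hx =>
    obtain ⟨b, hb, rfl⟩ := hx
    intro s
    induction s using MvPolynomial.induction_on' with
    | monomial u r =>
      have hm : monomial u r * map (algebraMap K R) b =
          C r * map (algebraMap K R) (monomial u 1 * b) := by
        rw [map_mul, map_monomial, map_one, ← mul_assoc, C_mul_monomial, mul_one]
      rw [hm, extendEnd_C_mul_map, hπ _ (B.mul_mem_left _ hb)]
    | add p q hp hq => rw [add_mul, map_add, hp, hq]
  | zero => simp
  | add x y _ _ hx hy =>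
    intro s
    rw [mul_add, map_add, hx, hy]
  | smul a x _ hx =>
    intro s
    rw [smul_eq_mul, ← mul_assoc, hx]

lemma map_C_inf_map_map (A : Ideal R) (B : Ideal (MvPolynomial τ K)) :
    A.map (C : R →+* MvPolynomial τ R) ⊓ B.map (map (algebraMap K R)) =
      A.map (C : R →+* MvPolynomial τ R) * B.map (map (algebraMap K R)) := by
  refine le_antisymm ?_ Ideal.mul_le_inf
  rintro F ⟨hA, hB⟩
  obtain ⟨q, hq⟩ := Submodule.exists_isCompl (B.restrictScalars K)
  let π : MvPolynomial τ K →ₗ[K] MvPolynomial τ K := (B.restrictScalars K).projection q hq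
  have hπ : ∀ b ∈ B, π b = b := fun b hb =>
    Submodule.projection_apply_left hq ⟨b, hb⟩
  have hπB : ∀ t, π t ∈ B := fun t => Submodule.projection_apply_mem hq t
  rw [← extendEnd_eq_self π B hπ hB, F.as_sum, map_sum]
  refine Ideal.sum_mem _ fun u _ => ?_
  rw [extendEnd_monomial]
  exact Ideal.mul_mem_mul (Ideal.mem_map_of_mem _ (mem_map_C_iff.mp hA u))
    (Ideal.mem_map_of_mem _ (hπB _))

end Iterated

lemma isHomogeneous_of_forall_degree {σ K : Type} [CommSemiring K] {f : MvPolynomial σ K} {d : ℕ}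
    (h : ∀ w, coeff w f ≠ 0 → w.degree = d) : f.IsHomogeneous d := by
  intro w hw
  rw [← h w hw, Finsupp.degree_eq_weight_one]
  rfl

section Split

variable {K σ τ ρ : Type} [Field K] (e : τ ⊕ σ ≃ ρ)

/-- Polynomials in the variables `τ ⊕ σ` as polynomials in `τ` over polynomials in `σ`. -/
def splitEquiv : MvPolynomial ρ K ≃ₐ[K] MvPolynomial τ (MvPolynomial σ K) :=
  (renameEquiv K e.symm).trans (sumAlgEquiv K τ σ)

lemma splitEquiv_rename_inr (f : MvPolynomial σ K) :
    splitEquiv e (rename (e ∘ Sum.inr) f) = C f := by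
  have h := DFunLike.congr_fun (sumAlgEquiv_comp_rename_inr K τ σ) f
  simpa [splitEquiv, rename_rename, ← Function.comp_assoc] using h

lemma splitEquiv_rename_inl (g : MvPolynomial τ K) :
    splitEquiv e (rename (e ∘ Sum.inl) g) = map (algebraMap K (MvPolynomial σ K)) g := by
  have h := DFunLike.congr_fun (sumAlgEquiv_comp_rename_inl K τ σ) g
  simpa [splitEquiv, rename_rename, ← Function.comp_assoc] using h

lemma mem_map_iff_apply_mem_map {A S S' : Type} [CommRing A] [CommRing S] [CommRing S']
    (φ : A →+* S) (ψ : S ≃+* S') (χ : A →+* S') (h : ∀ a, ψ (φ a) = χ a) (I : Ideal A) (x : S) :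
    x ∈ I.map φ ↔ ψ x ∈ I.map χ := by
  have hχ : χ = (ψ : S →+* S').comp φ := RingHom.ext fun a => (h a).symm
  rw [hχ, ← Ideal.map_map]
  conv_lhs => rw [← Ideal.comap_map_of_bijective (ψ : S →+* S') ψ.bijective (I := I.map φ)]
  rfl

lemma mem_map_rename_inr_iff (A : Ideal (MvPolynomial σ K)) (f : MvPolynomial ρ K) :
    f ∈ A.map (rename (R := K) (e ∘ Sum.inr)) ↔
      splitEquiv e f ∈ A.map (C : _ →+* MvPolynomial τ (MvPolynomial σ K)) :=
  mem_map_iff_apply_mem_map (rename (R := K) (e ∘ Sum.inr)).toRingHom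
    (splitEquiv e).toRingEquiv _ (splitEquiv_rename_inr e) A f

lemma mem_map_rename_inl_iff (B : Ideal (MvPolynomial τ K)) (f : MvPolynomial ρ K) :
    f ∈ B.map (rename (R := K) (e ∘ Sum.inl)) ↔
      splitEquiv e f ∈ B.map (map (algebraMap K (MvPolynomial σ K))) :=
  mem_map_iff_apply_mem_map (rename (R := K) (e ∘ Sum.inl)).toRingHom
    (splitEquiv e).toRingEquiv _ (splitEquiv_rename_inl e) B f

lemma exists_splitEquiv_monomial (v : ρ →₀ ℕ) (a : K) :
    ∃ u w, u.degree + w.degree = v.degree ∧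
      splitEquiv e (monomial v a) = monomial u (monomial w a) := by
  obtain ⟨v, rfl⟩ := Finsupp.mapDomain_surjective e.surjective v
  obtain ⟨⟨u, w⟩, rfl⟩ := (Finsupp.sumFinsuppEquivProdFinsupp (γ := ℕ)).symm.surjective v
  have hv : Finsupp.mapDomain e (Finsupp.sumFinsuppEquivProdFinsupp.symm (u, w)) =
      Finsupp.mapDomain (e ∘ Sum.inl) u + Finsupp.mapDomain (e ∘ Sum.inr) w := by
    change Finsupp.mapDomain e (Finsupp.sumElim u w) = _
    rw [Finsupp.sumElim_eq_add, Finsupp.mapDomain_add, Finsupp.mapDomain_comp,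
      Finsupp.mapDomain_comp]
  refine ⟨u, w, ?_, ?_⟩
  · rw [hv, map_add, Finsupp.degree_mapDomain, Finsupp.degree_mapDomain]
  · rw [hv, ← one_mul a, ← monomial_mul, ← rename_monomial, ← rename_monomial, map_mul,
      splitEquiv_rename_inl, splitEquiv_rename_inr, map_monomial, map_one, mul_comm, C_mul_monomial,
      mul_one, one_mul]

lemma degree_add_degree_of_coeff_splitEquiv_ne_zero {f : MvPolynomial ρ K} {d : ℕ}
    (hf : f.IsHomogeneous d) {u : τ →₀ ℕ} {w : σ →₀ ℕ}
    (h : coeff w (coeff u (splitEquiv e f)) ≠ 0) : u.degree + w.degree = d := by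
  classical
  rw [f.as_sum, map_sum, coeff_sum, coeff_sum] at h
  obtain ⟨v, hv, hne⟩ := Finset.exists_ne_zero_of_sum_ne_zero h
  obtain ⟨u', w', hdeg, hm⟩ := exists_splitEquiv_monomial e v (coeff v f)
  rw [hm, coeff_monomial] at hne
  split_ifs at hne with hu
  · rw [coeff_monomial] at hne
    split_ifs at hne with hw
    · rw [← hu, ← hw, hdeg]
      by_contra hd
      exact mem_support_iff.mp hv (hf.coeff_eq_zero hd)
    · exact absurd rfl hne
  · exact absurd (coeff_zero _) hne

lemma mem_map_rename_inr_of_rename_inl_mul_mem (A : Ideal (MvPolynomial σ K))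
    {g : MvPolynomial τ K} (hg : g ≠ 0) {f : MvPolynomial ρ K}
    (h : rename (e ∘ Sum.inl) g * f ∈ A.map (rename (R := K) (e ∘ Sum.inr))) :
    f ∈ A.map (rename (R := K) (e ∘ Sum.inr)) := by
  rw [mem_map_rename_inr_iff, map_mul, splitEquiv_rename_inl] at h
  rw [mem_map_rename_inr_iff]
  exact mem_map_C_of_map_mul_mem A hg h

lemma map_rename_inr_inf_map_rename_inl (A : Ideal (MvPolynomial σ K))
    (B : Ideal (MvPolynomial τ K)) :
    A.map (rename (R := K) (e ∘ Sum.inr)) ⊓ B.map (rename (R := K) (e ∘ Sum.inl)) =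
      A.map (rename (R := K) (e ∘ Sum.inr)) * B.map (rename (R := K) (e ∘ Sum.inl)) := by
  refine le_antisymm ?_ Ideal.mul_le_inf
  rintro f ⟨hA, hB⟩
  have h : splitEquiv e f ∈ A.map (C : _ →+* MvPolynomial τ (MvPolynomial σ K)) *
      B.map (map (algebraMap K (MvPolynomial σ K))) := by
    rw [← map_C_inf_map_map]
    exact ⟨(mem_map_rename_inr_iff e A f).mp hA, (mem_map_rename_inl_iff e B f).mp hB⟩
  rw [← (splitEquiv e).symm_apply_apply f]
  generalize splitEquiv e f = F at h
  induction h using Submodule.mul_induction_on' with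
  | mem_mul_mem x hx y hy =>
    rw [map_mul]
    refine Ideal.mul_mem_mul ((mem_map_rename_inr_iff e A _).mpr ?_)
      ((mem_map_rename_inl_iff e B _).mpr ?_)
    · rwa [AlgEquiv.apply_symm_apply]
    · rwa [AlgEquiv.apply_symm_apply]
  | add x _ y _ hx hy =>
    rw [map_add]
    exact Ideal.add_mem _ hx hy

/-- Prime colon ideals of `A` give prime colon ideals of the product `A B`. -/
lemma isPrime_colon_mul (A : Ideal (MvPolynomial σ K)) (B : Ideal (MvPolynomial τ K))
    {f : MvPolynomial σ K} (hf : (A.colon (Ideal.span {f})).IsPrime)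
    {g : MvPolynomial τ K} (hg : g ≠ 0) (hgB : g ∈ B) :
    ((A.map (rename (R := K) (e ∘ Sum.inr)) * B.map (rename (R := K) (e ∘ Sum.inl))).colon
      (Ideal.span {rename (e ∘ Sum.inr) f * rename (e ∘ Sum.inl) g})).IsPrime := by
  set p := A.colon (Ideal.span {f}) with hp
  have hprime : (p.map (C : _ →+* MvPolynomial τ (MvPolynomial σ K))).IsPrime := by
    rw [← Ideal.mk_ker (I := p), ← ker_map]
    exact RingHom.ker_isPrime _
  convert! hprime.comap (splitEquiv e) using 1
  ext h
  rw [Ideal.mem_colon_span_singleton, Ideal.mem_comap, mem_map_C_iff,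
    ← map_rename_inr_inf_map_rename_inl]
  have hB : h * (rename (e ∘ Sum.inr) f * rename (e ∘ Sum.inl) g) ∈
      B.map (rename (R := K) (e ∘ Sum.inl)) :=
    Ideal.mul_mem_left _ _ (Ideal.mul_mem_left _ _ (Ideal.mem_map_of_mem _ hgB))
  have hA : h * (rename (e ∘ Sum.inr) f * rename (e ∘ Sum.inl) g) ∈
      A.map (rename (R := K) (e ∘ Sum.inr)) ↔
      rename (e ∘ Sum.inr) f * h ∈ A.map (rename (R := K) (e ∘ Sum.inr)) := by
    have hcomm : h * (rename (e ∘ Sum.inr) f * rename (e ∘ Sum.inl) g) =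
      rename (e ∘ Sum.inl) g * (rename (e ∘ Sum.inr) f * h) := by ring
    rw [hcomm]
    exact ⟨mem_map_rename_inr_of_rename_inl_mul_mem e A hg, Ideal.mul_mem_left _ _⟩
  rw [Ideal.mem_inf, hA, and_iff_left hB, mem_map_rename_inr_iff, map_mul, splitEquiv_rename_inr,
    mem_map_C_iff]
  simp only [coeff_C_mul, hp, Ideal.mem_colon_span_singleton, mul_comm f]

/-- A homogeneous element of the extension of `B` with prime colon into the extension of `A` has
degree the sum of those of a homogeneous element with prime colon into `A` and of a nonzero
homogeneous element of `B`. -/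
lemma exists_isHomogeneous_of_isPrime_colon (A : Ideal (MvPolynomial σ K))
    (B : Ideal (MvPolynomial τ K)) {f : MvPolynomial ρ K} {d : ℕ} (hf : f.IsHomogeneous d)
    (hP : ((A.map (rename (R := K) (e ∘ Sum.inr))).colon (Ideal.span {f})).IsPrime)
    (hfB : f ∈ B.map (rename (R := K) (e ∘ Sum.inl))) :
    ∃ a b, a + b = d ∧
      (∃ r : MvPolynomial σ K, r.IsHomogeneous a ∧ (A.colon (Ideal.span {r})).IsPrime) ∧
      ∃ g ∈ B, g ≠ 0 ∧ g.IsHomogeneous b := by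
  set F := splitEquiv e f with hF
  have hp := hP.comap (rename (R := K) (e ∘ Sum.inr) : _ →ₐ[K] MvPolynomial ρ K)
  have hinf : Ideal.comap (rename (R := K) (e ∘ Sum.inr))
      ((A.map (rename (R := K) (e ∘ Sum.inr))).colon (Ideal.span {f})) =
      F.support.inf fun u => A.colon (Ideal.span {coeff u F}) := by
    ext r
    simp only [Ideal.mem_comap, Ideal.mem_colon_span_singleton, mem_map_rename_inr_iff, map_mul,
      splitEquiv_rename_inr, mem_map_C_iff, coeff_C_mul, Submodule.mem_finsetInf, ← hF]
    refine ⟨fun h u _ => h u, fun h u => ?_⟩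
    by_cases hu : u ∈ F.support
    · exact h u hu
    · rw [notMem_support_iff.mp hu, mul_zero]
      exact A.zero_mem
  rw [hinf] at hp
  obtain ⟨u, hu, hle⟩ := (Ideal.IsPrime.inf_le' hp).mp le_rfl
  have heq := le_antisymm (Finset.inf_le (f := fun u => A.colon (Ideal.span {coeff u F})) hu) hle
  rw [heq] at hp
  obtain ⟨w, hw⟩ := exists_coeff_ne_zero (mem_support_iff.mp hu)
  have hdeg := degree_add_degree_of_coeff_splitEquiv_ne_zero e hf hw
  refine ⟨w.degree, u.degree, by rw [add_comm, hdeg], ⟨coeff u F, ?_, hp⟩,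
    mapFunctional (lcoeff K w) F, mapFunctional_mem _ B ?_, ?_, ?_⟩
  · refine isHomogeneous_of_forall_degree fun w' hw' => ?_
    have hdeg' := degree_add_degree_of_coeff_splitEquiv_ne_zero e hf hw'
    omega
  · exact (mem_map_rename_inl_iff e B f).mp hfB
  · intro h0
    apply hw
    have := coeff_mapFunctional (lcoeff K w) F u
    rw [h0] at this
    simpa using this.symm
  · refine isHomogeneous_of_forall_degree fun u' hu' => ?_
    rw [coeff_mapFunctional] at hu'
    have hdeg' := degree_add_degree_of_coeff_splitEquiv_ne_zero e hf hu'
    omega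

end Split

section VNumber

variable {σ K : Type} [Field K]

attribute [local instance] MvPolynomial.gradedAlgebra

lemma vnumber_eq_sInf (L : Ideal (MvPolynomial σ K)) :
    vnumber L = sInf {d : ℕ | ∃ f : MvPolynomial σ K,
      f.IsHomogeneous d ∧ (L.colon (Ideal.span {f})).IsPrime} := by
  refine congrArg sInf (Set.ext fun d => ⟨?_, ?_⟩)
  · rintro ⟨p, hp, f, hf, rfl⟩
    exact ⟨f, hf, hp.isPrime⟩
  · rintro ⟨f, hf, hp⟩
    refine ⟨_, ⟨hp, Ideal.Quotient.mk L f, ?_⟩, f, hf, rfl⟩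
    have h : (⊥ : Submodule (MvPolynomial σ K) (MvPolynomial σ K ⧸ L)).colon
        {Ideal.Quotient.mk L f} = L.colon (Ideal.span {f}) := by
      ext r
      rw [Submodule.mem_colon_singleton, Ideal.mem_colon_span_singleton, Submodule.mem_bot,
        ← Ideal.Quotient.eq_zero_iff_mem]
      rfl
    rw [h, hp.radical]

lemma vnumber_le {L : Ideal (MvPolynomial σ K)} {f : MvPolynomial σ K} {d : ℕ}
    (hf : f.IsHomogeneous d) (hp : (L.colon (Ideal.span {f})).IsPrime) : vnumber L ≤ d := by
  rw [vnumber_eq_sInf]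
  exact Nat.sInf_le ⟨f, hf, hp⟩

lemma exists_isHomogeneous_vnumber_of_exists {L : Ideal (MvPolynomial σ K)} {f : MvPolynomial σ K}
    {d : ℕ} (hf : f.IsHomogeneous d) (hp : (L.colon (Ideal.span {f})).IsPrime) :
    ∃ g : MvPolynomial σ K, g.IsHomogeneous (vnumber L) ∧ (L.colon (Ideal.span {g})).IsPrime := by
  rw [vnumber_eq_sInf]
  exact Nat.sInf_mem (s := {d : ℕ | ∃ f : MvPolynomial σ K,
      f.IsHomogeneous d ∧ (L.colon (Ideal.span {f})).IsPrime}) ⟨d, f, hf, hp⟩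

lemma isGradedIdeal_iff (L : Ideal (MvPolynomial σ K)) :
    IsGradedIdeal L ↔ L.IsHomogeneous (homogeneousSubmodule σ K) := by
  refine ⟨fun h i f hf => ?_, fun h f hf d => homogeneousComponent_mem_of_mem h hf d⟩
  rw [show ((DirectSum.decompose (homogeneousSubmodule σ K) f) i : MvPolynomial σ K) =
    homogeneousComponent i f from decomposition.decompose'_apply f i]
  exact h f hf i

lemma IsGradedIdeal.pow {L : Ideal (MvPolynomial σ K)} (h : IsGradedIdeal L) (k : ℕ) :
    IsGradedIdeal (L ^ k) := by
  rw [isGradedIdeal_iff] at h ⊢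
  induction k with
  | zero => simpa using Ideal.IsHomogeneous.top _
  | succ k ih => rw [pow_succ]; exact ih.mul h

lemma IsGradedIdeal.colon {L : Ideal (MvPolynomial σ K)} (h : IsGradedIdeal L)
    {f : MvPolynomial σ K} {d : ℕ} (hf : f.IsHomogeneous d) :
    IsGradedIdeal (L.colon (Ideal.span {f})) := by
  intro r hr i
  rw [Ideal.mem_colon_span_singleton] at hr ⊢
  have hc := h _ hr (i + d)
  convert! hc using 1
  rw [← decomposition.decompose'_apply, ← decomposition.decompose'_apply]
  exact (DirectSum.coe_decompose_mul_add_of_right_mem (homogeneousSubmodule σ K) hf).symm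

lemma exists_isHomogeneous_isPrime_colon [Finite σ] (L : Ideal (MvPolynomial σ K))
    (hgr : IsGradedIdeal L) (hL : L ≠ ⊤) :
    ∃ d, ∃ f : MvPolynomial σ K, f.IsHomogeneous d ∧ (L.colon (Ideal.span {f})).IsPrime := by
  obtain ⟨_, ⟨d, f, hf, hfL, rfl⟩, hmax⟩ := set_has_maximal_iff_noetherian.mpr
    (inferInstanceAs (IsNoetherianRing (MvPolynomial σ K)))
    {p | ∃ d, ∃ f : MvPolynomial σ K, f.IsHomogeneous d ∧ f ∉ L ∧ L.colon (Ideal.span {f}) = p}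
    ⟨_, 0, 1, isHomogeneous_one _ _, (Ideal.ne_top_iff_one L).mp hL, rfl⟩
  refine ⟨d, f, hf, ?_⟩
  refine Ideal.IsHomogeneous.isPrime_of_homogeneous_mem_or_mem
    ((isGradedIdeal_iff _).mp (hgr.colon hf)) ?_ ?_
  · rw [Ideal.ne_top_iff_one, Ideal.mem_colon_span_singleton, one_mul]
    exact hfL
  · rintro x y - ⟨j, hy⟩ hxy
    by_contra! hcon
    rw [Ideal.mem_colon_span_singleton] at hxy hcon
    have hle : L.colon (Ideal.span {f}) ≤ L.colon (Ideal.span {y * f}) := by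
      intro r hr
      rw [Ideal.mem_colon_span_singleton] at hr ⊢
      rw [mul_left_comm]
      exact L.mul_mem_left _ hr
    have hnlt := hmax _ ⟨j + d, y * f, hy.mul hf,
      fun hyf => hcon.2 (Ideal.mem_colon_span_singleton.mpr hyf), rfl⟩
    have hxmem : x ∈ L.colon (Ideal.span {y * f}) := by
      rwa [Ideal.mem_colon_span_singleton, ← mul_assoc]
    rw [← hle.eq_of_not_lt hnlt, Ideal.mem_colon_span_singleton] at hxmem
    exact hcon.1 hxmem

lemma exists_isHomogeneous_vnumber [Finite σ] (L : Ideal (MvPolynomial σ K))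
    (hgr : IsGradedIdeal L) (hL : L ≠ ⊤) :
    ∃ f : MvPolynomial σ K, f.IsHomogeneous (vnumber L) ∧ (L.colon (Ideal.span {f})).IsPrime := by
  obtain ⟨d, f, hf, hp⟩ := exists_isHomogeneous_isPrime_colon L hgr hL
  exact exists_isHomogeneous_vnumber_of_exists hf hp

lemma exists_mem_pow_isHomogeneous {L : Ideal (MvPolynomial σ K)} (hgr : IsGradedIdeal L)
    (hL : L ≠ ⊥) (k : ℕ) :
    ∃ g ∈ L ^ k, g ≠ 0 ∧ g.IsHomogeneous (alphaDeg L * k) := by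
  obtain ⟨f, hf, hf0⟩ := Submodule.exists_mem_ne_zero_of_ne_bot hL
  obtain ⟨w, hw⟩ := exists_coeff_ne_zero hf0
  obtain ⟨g, hg, hg0, hgd⟩ : alphaDeg L ∈
      {d : ℕ | ∃ f ∈ L, f ≠ 0 ∧ MvPolynomial.IsHomogeneous f d} := by
    refine Nat.sInf_mem ⟨w.degree, homogeneousComponent w.degree f, hgr f hf _, ?_,
      homogeneousComponent_isHomogeneous _ _⟩
    intro h0
    apply hw
    have hc := coeff_homogeneousComponent w.degree f w
    rwa [h0, coeff_zero, if_pos rfl, eq_comm] at hc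
  exact ⟨g ^ k, Ideal.pow_mem_pow hg k, pow_ne_zero k hg0, hgd.pow k⟩

lemma alphaDeg_mul_le {L : Ideal (MvPolynomial σ K)} (hgr : IsGradedIdeal L) {k b : ℕ}
    {g : MvPolynomial σ K} (hg : g ∈ L ^ k) (hg0 : g ≠ 0) (hgb : g.IsHomogeneous b) :
    alphaDeg L * k ≤ b := by
  have hle : L ≤ idealOfVars σ K ^ alphaDeg L := by
    intro f hf
    rw [mem_pow_idealOfVars_iff]
    intro w hw
    refine Nat.sInf_le ⟨homogeneousComponent w.degree f, hgr f hf _, fun h0 => ?_,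
      homogeneousComponent_isHomogeneous _ _⟩
    apply mem_support_iff.mp hw
    have hc := coeff_homogeneousComponent w.degree f w
    rwa [h0, coeff_zero, if_pos rfl, eq_comm] at hc
  have hmem := Ideal.pow_right_mono hle k hg
  rw [← pow_mul, mem_pow_idealOfVars_iff] at hmem
  obtain ⟨w, hw⟩ := exists_coeff_ne_zero hg0
  have hdeg : w.degree = b := by
    by_contra hne
    exact hw (hgb.coeff_eq_zero hne)
  rw [← hdeg]
  exact hmem w (mem_support_iff.mpr hw)

end VNumber

lemma pow_ne_top {A : Type} [CommRing A] {L : Ideal A} (hL : L ≠ ⊤) {k : ℕ} (hk : k ≠ 0) :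
    L ^ k ≠ ⊤ :=
  ne_top_of_le_ne_top hL (Ideal.pow_le_self hk)

/-- The lower bound on degrees of homogeneous elements whose colon is governed by `A`. -/
lemma vnumber_add_alphaDeg_mul_le {K σ τ ρ : Type} [Field K] (e : τ ⊕ σ ≃ ρ)
    {A : Ideal (MvPolynomial σ K)} {J : Ideal (MvPolynomial τ K)} {k d : ℕ} (hA : A ≠ ⊥)
    (hJ : IsGradedIdeal J) {f : MvPolynomial ρ K} (hf : f.IsHomogeneous d)
    (hP : ((A.map (rename (R := K) (e ∘ Sum.inr))).colon (Ideal.span {f})).IsPrime)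
    (hle : (A.map (rename (R := K) (e ∘ Sum.inr))).colon (Ideal.span {f}) ≤
      ((J ^ k).map (rename (R := K) (e ∘ Sum.inl))).colon (Ideal.span {f})) :
    vnumber A + alphaDeg J * k ≤ d := by
  obtain ⟨a, ha, ha0⟩ := Submodule.exists_mem_ne_zero_of_ne_bot hA
  have hfJ : f ∈ (J ^ k).map (rename (R := K) (e ∘ Sum.inl)) :=
    mem_map_rename_inr_of_rename_inl_mul_mem ((Equiv.sumComm σ τ).trans e) (J ^ k) ha0
      (Ideal.mem_colon_span_singleton.mp
        (hle (Ideal.le_colon (Ideal.mem_map_of_mem (rename (R := K) (e ∘ Sum.inr)) ha))))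
  obtain ⟨a, b, rfl, ⟨r, hr, hrp⟩, g, hg, hg0, hgb⟩ :=
    exists_isHomogeneous_of_isPrime_colon e A (J ^ k) hf hP hfJ
  exact add_le_add (vnumber_le hr hrp) (alphaDeg_mul_le hJ hg hg0 hgb)

/-- Corollary 2.3: for nonzero proper graded ideals `I ⊂ R`, `J ⊂ T`,
identified with their extensions to `S`, there is `k₀ ≥ 1` such that for all `k ≥ k₀`,
`v((IJ)^k) = min{ v(I^k) + α(J)·k , v(J^k) + α(I)·k }`. -/
theorem stmt2 {K : Type} [Field K] {n m : ℕ}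
    (I : Ideal (MvPolynomial (Fin n) K)) (J : Ideal (MvPolynomial (Fin m) K))
    (hInz : I ≠ ⊥) (hIpr : I ≠ ⊤) (hIgr : IsGradedIdeal I)
    (hJnz : J ≠ ⊥) (hJpr : J ≠ ⊤) (hJgr : IsGradedIdeal J)
    (eI eJ : Ideal (MvPolynomial (Fin n ⊕ Fin m) K))
    (heI : eI = Ideal.map (rename Sum.inl) I)
    (heJ : eJ = Ideal.map (rename Sum.inr) J) :
    ∃ k₀ : ℕ, 1 ≤ k₀ ∧ ∀ k : ℕ, k₀ ≤ k →
      vnumber ((eI * eJ) ^ k) =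
        min (vnumber (I ^ k) + alphaDeg J * k) (vnumber (J ^ k) + alphaDeg I * k) := by
  refine ⟨1, le_rfl, fun k hk => ?_⟩
  have hk0 : k ≠ 0 := by omega
  rw [mul_pow, heI, heJ, ← Ideal.map_pow, ← Ideal.map_pow]
  obtain ⟨fI, hfI, hfIp⟩ := exists_isHomogeneous_vnumber (I ^ k) (hIgr.pow k)
    (pow_ne_top hIpr hk0)
  obtain ⟨fJ, hfJ, hfJp⟩ := exists_isHomogeneous_vnumber (J ^ k) (hJgr.pow k)
    (pow_ne_top hJpr hk0)
  obtain ⟨gI, hgI, hgI0, hgId⟩ := exists_mem_pow_isHomogeneous hIgr hInz k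
  obtain ⟨gJ, hgJ, hgJ0, hgJd⟩ := exists_mem_pow_isHomogeneous hJgr hJnz k
  have hl := isPrime_colon_mul (Equiv.sumComm (Fin m) (Fin n)) (I ^ k) (J ^ k) hfIp hgJ0 hgJ
  have hr := isPrime_colon_mul (Equiv.refl (Fin n ⊕ Fin m)) (J ^ k) (I ^ k) hfJp hgI0 hgI
  have hinl : (Equiv.sumComm (Fin m) (Fin n)) ∘ Sum.inr = Sum.inl := rfl
  have hinr : (Equiv.sumComm (Fin m) (Fin n)) ∘ Sum.inl = Sum.inr := rfl
  have hinl' : (Equiv.refl (Fin n ⊕ Fin m)) ∘ Sum.inl = Sum.inl := rfl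
  have hinr' : (Equiv.refl (Fin n ⊕ Fin m)) ∘ Sum.inr = Sum.inr := rfl
  have hinf := map_rename_inr_inf_map_rename_inl (Equiv.sumComm (Fin m) (Fin n)) (I ^ k) (J ^ k)
  rw [hinl, hinr] at hl hinf
  rw [hinl', hinr', mul_comm (Ideal.map _ _)] at hr
  have hld := (hfI.rename_isHomogeneous (f := (Sum.inl : Fin n → Fin n ⊕ Fin m))).mul
    (hgJd.rename_isHomogeneous (f := (Sum.inr : Fin m → Fin n ⊕ Fin m)))
  have hrd := (hfJ.rename_isHomogeneous (f := (Sum.inr : Fin m → Fin n ⊕ Fin m))).mul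
    (hgId.rename_isHomogeneous (f := (Sum.inl : Fin n → Fin n ⊕ Fin m)))
  refine le_antisymm (le_min (vnumber_le hld hl) (vnumber_le hrd hr)) ?_
  obtain ⟨f, hf, hP⟩ := exists_isHomogeneous_vnumber_of_exists hld hl
  have hcolon : ∀ A B : Ideal (MvPolynomial (Fin n ⊕ Fin m) K), (A ⊓ B).colon (Ideal.span {f}) =
      A.colon (Ideal.span {f}) ⊓ B.colon (Ideal.span {f}) := by
    intro A B
    ext r
    simp only [Ideal.mem_colon_span_singleton, Ideal.mem_inf]
  rw [← hinf, hcolon] at hP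
  rcases (Ideal.IsPrime.inf_le hP).mp le_rfl with h | h
  · rw [inf_eq_left.mpr (h.trans inf_le_right)] at hP
    exact (min_le_left _ _).trans (vnumber_add_alphaDeg_mul_le (Equiv.sumComm (Fin m) (Fin n))
      (pow_ne_zero k hInz) hJgr hf hP (h.trans inf_le_right))
  · rw [inf_eq_right.mpr (h.trans inf_le_left)] at hP
    exact (min_le_right _ _).trans (vnumber_add_alphaDeg_mul_le (Equiv.refl (Fin n ⊕ Fin m))
      (pow_ne_zero k hJnz) hIgr hf hP (h.trans inf_le_left))
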